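/- arXiv:2105.14200 — 2 statements merged into one kernel-verified Lean document; each statement's English description precedes it below -/
import Mathlib

section
/- Let p be a real number of the form p = 2i/(2j+1) with i, j positive integers and p > 2. Let (x_n)_{n≥1} be a real sequence with ∑_{n=1}^∞ |x_n|^p < ∞, and set y_n = ∑_{k=n}^∞ x_k/k (this series converges absolutely). Then ∑_{n=1}^∞ |y_n - x_n|^p ≤ (p-1)^p · ∑_{n=1}^∞ |x_n|^p. -/
/-!
Put `C = p (1 - 1/p) ^ (p - 1)`. Burkholder's inequality
`b ^ p - (p - 1) ^ p a ^ p ≤ C (a + b) ^ (p - 1) (b - (p - 1) a)` for `a, b ≥ 0` reduces by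
homogeneity to one variable `s = a / (a + b) ∈ [0, 1]`. There the gap between the two sides has
a convex derivative which vanishes at `s = 1/p` and is nonpositive at `s = 0`; hence it is
nonpositive before `1/p` and nonnegative after it, and the gap has minimum value `0` at `1/p`.
Replacing `(‖x‖ + ‖y‖) ^ (p - 1) (‖y‖ - (p - 1) ‖x‖)` by its upper bound
`‖x + y‖ ^ (p - 2) ⟪x + y, y - (p - 1) x⟫` turns this, with `y = a - x`, into
`‖a - x‖ ^ p - (p - 1) ^ p ‖x‖ ^ p ≤ C (‖a‖ ^ p - p ‖a‖ ^ (p - 2) ⟪a, x⟫)`.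
For `a = y_n` and `x = x_n`, convexity of `‖·‖ ^ p` and `y_{n+1} = y_n - x_n / n` bound the
right-hand side by `C (n ‖y_{n+1}‖ ^ p - (n - 1) ‖y_n‖ ^ p)`, which telescopes to zero for a
finitely supported sequence.
-/

open Set Filter Topology
open scoped InnerProductSpace

section

variable {p : ℝ}

lemma rpow_sub_one_mul_self {a : ℝ} (ha : 0 ≤ a) (hp : p ≠ 0) : a ^ (p - 1) * a = a ^ p := by
  rw [← Real.rpow_add_one' ha (by simpa using hp), sub_add_cancel]

lemma rpow_sub_two_mul_self {a : ℝ} (ha : 0 ≤ a) (hp : p ≠ 1) :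
    a ^ (p - 2) * a = a ^ (p - 1) := by
  rw [show p - 2 = p - 1 - 1 by ring, rpow_sub_one_mul_self ha (sub_ne_zero.2 hp)]

lemma rpow_sub_two_mul_sq {a : ℝ} (ha : 0 ≤ a) (hp : p ≠ 0) : a ^ (p - 2) * a ^ 2 = a ^ p := by
  rw [← Real.rpow_add_natCast' ha (by simpa using hp), Nat.cast_ofNat, sub_add_cancel]

lemma rpow_add_mul_sub_le_rpow {a b : ℝ} (ha : 0 ≤ a) (hb : 0 ≤ b) (hp : 1 ≤ p) :
    a ^ p + p * a ^ (p - 1) * (b - a) ≤ b ^ p := by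
  rcases ha.eq_or_lt with rfl | ha
  · rcases hp.eq_or_lt with rfl | hp
    · simp
    · rw [Real.zero_rpow (by linarith), Real.zero_rpow (by linarith)]
      simpa using Real.rpow_nonneg hb p
  · have bernoulli : 1 + p * (b / a - 1) ≤ (b / a) ^ p := by
      have hba : 0 ≤ b / a := by positivity
      simpa using one_add_mul_self_le_rpow_one_add (s := b / a - 1) (by linarith) hp
    calc a ^ p + p * a ^ (p - 1) * (b - a) = a ^ p * (1 + p * (b / a - 1)) := by
          rw [← rpow_sub_one_mul_self ha.le (by linarith)]
          field_simp
      _ ≤ a ^ p * (b / a) ^ p := by gcongr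
      _ = b ^ p := by
          rw [← Real.mul_rpow ha.le (by positivity), mul_div_cancel₀ _ ha.ne']

lemma mul_rpow_sub_rpow_mul_le {a b : ℝ} (hb : 0 ≤ b) (hba : b ≤ a) (hp : 2 ≤ p) :
    p * (a ^ (p - 2) - b ^ (p - 2)) * (a * b) ≤ (p - 2) * (a ^ p - b ^ p) := by
  let h : ℝ → ℝ := fun t ↦ (p - 2) * t ^ p - p * (b * t ^ (p - 1) - b ^ (p - 1) * t)
  have h_deriv (t : ℝ) : HasDerivAt h
      (p * ((p - 2) * t ^ (p - 1) - (p - 1) * b * t ^ (p - 2) + b ^ (p - 1))) t := by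
    have h₁ := Real.hasDerivAt_rpow_const (x := t) (p := p) (.inr (by linarith))
    have h₂ := Real.hasDerivAt_rpow_const (x := t) (p := p - 1) (.inr (by linarith))
    refine ((h₁.const_mul (p - 2)).sub (((h₂.const_mul b).sub
      ((hasDerivAt_id t).const_mul (b ^ (p - 1)))).const_mul p)).congr_deriv ?_
    rw [show p - 1 - 1 = p - 2 by ring]
    ring
  have h_mono : MonotoneOn h (Ici b) := by
    refine monotoneOn_of_deriv_nonneg (convex_Ici b)
      (fun t _ ↦ (h_deriv t).continuousAt.continuousWithinAt)
      (fun t _ ↦ (h_deriv t).differentiableAt.differentiableWithinAt) fun t ht ↦ ?_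
    rw [interior_Ici, mem_Ioi] at ht
    rw [(h_deriv t).deriv]
    have ht₀ : 0 ≤ t := hb.trans ht.le
    have tangent := rpow_add_mul_sub_le_rpow ht₀ hb (show 1 ≤ p - 1 by linarith)
    rw [show p - 1 - 1 = p - 2 by ring, ← rpow_sub_two_mul_self ht₀ (by linarith)] at tangent
    rw [← rpow_sub_two_mul_self ht₀ (by linarith)]
    exact mul_nonneg (by linarith) (by linarith)
  have h_le : h b ≤ h a := h_mono self_mem_Ici hba hba
  simp only [h, ← rpow_sub_two_mul_self hb (show p ≠ 1 by linarith),
    ← rpow_sub_two_mul_self (hb.trans hba) (show p ≠ 1 by linarith)] at h_le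
  linarith

/-- The constant `p (1 - 1/p) ^ (p - 1)` of Burkholder's inequality
`rpow_sub_mul_rpow_le_burkholder`. -/
noncomputable def burkholderConst (p : ℝ) : ℝ := p * (1 - 1 / p) ^ (p - 1)

lemma one_le_burkholderConst (hp : 2 ≤ p) : 1 ≤ burkholderConst p := by
  have hp₀ : 0 < p := by linarith
  have hp_inv : 1 / p ≤ 1 := by rw [div_le_one hp₀]; linarith
  have bernoulli : 1 + (p - 1) * -(1 / p) ≤ (1 + -(1 / p)) ^ (p - 1) :=
    one_add_mul_self_le_rpow_one_add (by linarith) (by linarith)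
  calc 1 = p * (1 + (p - 1) * -(1 / p)) := by field_simp; ring
    _ ≤ p * (1 + -(1 / p)) ^ (p - 1) := by gcongr
    _ = burkholderConst p := by rw [burkholderConst, ← sub_eq_add_neg]

/-- After division by `p`, the derivative of `s ↦ (p - 1) ^ p * s ^ p - (1 - s) ^ p`. -/
noncomputable def burkholderSlope (p s : ℝ) : ℝ := (1 - s) ^ (p - 1) + (p - 1) ^ p * s ^ (p - 1)

lemma convexOn_burkholderSlope (hp : 2 ≤ p) : ConvexOn ℝ (Icc 0 1) (burkholderSlope p) := by
  have h_rpow : ConvexOn ℝ (Ici 0) fun s : ℝ ↦ s ^ (p - 1) := convexOn_rpow (by linarith)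
  have h_reflect : ConvexOn ℝ (Icc 0 1) fun s : ℝ ↦ (1 - s) ^ (p - 1) :=
    (h_rpow.comp_affineMap (AffineMap.lineMap (1 : ℝ) 0)).subset
      (fun s hs ↦ by simpa [AffineMap.lineMap_apply] using hs.2) (convex_Icc 0 1) |>.congr
      fun s _ ↦ by simp [AffineMap.lineMap_apply, neg_add_eq_sub]
  exact h_reflect.add <| (h_rpow.subset Icc_subset_Ici_self (convex_Icc 0 1)).smul
    (Real.rpow_nonneg (by linarith) p)

lemma burkholderSlope_zero (hp : p ≠ 1) : burkholderSlope p 0 = 1 := by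
  simp [burkholderSlope, Real.zero_rpow (sub_ne_zero.2 hp)]

lemma sub_one_rpow_mul_one_div_rpow (hp : 1 < p) :
    (p - 1) ^ p * (1 / p) ^ (p - 1) = (p - 1) * (1 - 1 / p) ^ (p - 1) := by
  have hp₀ : 0 < p := by linarith
  have hp₁ : 0 ≤ p - 1 := by linarith
  rw [← rpow_sub_one_mul_self hp₁ hp₀.ne', mul_right_comm, ← Real.mul_rpow hp₁ (by positivity),
    mul_comm]
  congr 2
  field_simp

lemma burkholderSlope_one_div (hp : 1 < p) : burkholderSlope p (1 / p) = burkholderConst p := by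
  rw [burkholderSlope, burkholderConst, sub_one_rpow_mul_one_div_rpow hp]
  ring

lemma burkholderSlope_zero_le (hp : 2 ≤ p) : burkholderSlope p 0 ≤ burkholderSlope p (1 / p) := by
  rw [burkholderSlope_zero (by linarith), burkholderSlope_one_div (by linarith)]
  exact one_le_burkholderConst hp

lemma burkholderSlope_le {s : ℝ} (hp : 2 ≤ p) (hs : s ∈ Icc 0 (1 / p)) :
    burkholderSlope p s ≤ burkholderSlope p (1 / p) := by
  have hp_inv : 1 / p ∈ Icc (0 : ℝ) 1 :=
    ⟨hs.1.trans hs.2, by rw [div_le_one (by linarith)]; linarith⟩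
  calc burkholderSlope p s ≤ max (burkholderSlope p 0) (burkholderSlope p (1 / p)) :=
        (convexOn_burkholderSlope hp).le_max_of_mem_Icc (left_mem_Icc.2 zero_le_one) hp_inv hs
    _ = burkholderSlope p (1 / p) := max_eq_right (burkholderSlope_zero_le hp)

lemma le_burkholderSlope {s : ℝ} (hp : 2 ≤ p) (hs : s ∈ Icc (1 / p) 1) :
    burkholderSlope p (1 / p) ≤ burkholderSlope p s := by
  have hp_inv : 0 < 1 / p := by positivity
  exact (convexOn_burkholderSlope hp).le_right_of_left_le'' (left_mem_Icc.2 zero_le_one)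
    ⟨hp_inv.le.trans hs.1, hs.2⟩ hp_inv hs.1 (burkholderSlope_zero_le hp)

/-- The difference of the two sides of Burkholder's inequality
`rpow_sub_mul_rpow_le_burkholder`, normalised to `a = s` and `b = 1 - s`. -/
noncomputable def burkholderGap (p s : ℝ) : ℝ :=
  burkholderConst p * (1 - p * s) - ((1 - s) ^ p - (p - 1) ^ p * s ^ p)

lemma hasDerivAt_burkholderGap (hp : 1 < p) (s : ℝ) :
    HasDerivAt (burkholderGap p) (p * (burkholderSlope p s - burkholderSlope p (1 / p))) s := by
  have h_affine := (((hasDerivAt_id s).const_mul p).const_sub 1).const_mul (burkholderConst p)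
  have h_reflect := ((hasDerivAt_id s).const_sub 1).rpow_const (p := p) (.inr hp.le)
  have h_rpow := (Real.hasDerivAt_rpow_const (x := s) (.inr hp.le)).const_mul ((p - 1) ^ p)
  refine (h_affine.sub (h_reflect.sub h_rpow)).congr_deriv ?_
  rw [burkholderSlope_one_div hp, burkholderSlope, id]
  ring

lemma burkholderGap_one_div (hp : 1 < p) : burkholderGap p (1 / p) = 0 := by
  have hp₀ : 0 < p := by linarith
  have hp_inv : 1 / p ≤ 1 := by rw [div_le_one hp₀]; exact hp.le
  rw [burkholderGap, ← rpow_sub_one_mul_self (sub_nonneg.2 hp_inv) hp₀.ne',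
    ← rpow_sub_one_mul_self (one_div_nonneg.2 hp₀.le) hp₀.ne', ← mul_assoc,
    sub_one_rpow_mul_one_div_rpow hp]
  field_simp
  ring

lemma burkholderGap_nonneg {s : ℝ} (hp : 2 ≤ p) (hs : s ∈ Icc 0 1) : 0 ≤ burkholderGap p s := by
  have hp₀ : 0 ≤ p := by linarith
  have h_deriv := hasDerivAt_burkholderGap (show 1 < p by linarith)
  have h_cont (t : ℝ) : ContinuousAt (burkholderGap p) t := (h_deriv t).continuousAt
  have h_diff (u : Set ℝ) : DifferentiableOn ℝ (burkholderGap p) u :=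
    fun t _ ↦ (h_deriv t).differentiableAt.differentiableWithinAt
  have h_min : IsMinOn (burkholderGap p) (Icc 0 1) (1 / p) := by
    refine isMinOn_Icc_of_deriv (h_cont _) (h_cont _) (h_cont _) (h_diff _) (h_diff _)
      (fun t ht ↦ ?_) fun t ht ↦ ?_
    all_goals rw [(h_deriv t).deriv]
    · exact mul_nonpos_of_nonneg_of_nonpos hp₀
        (sub_nonpos.2 (burkholderSlope_le hp (Ioo_subset_Icc_self ht)))
    · exact mul_nonneg hp₀ (sub_nonneg.2 (le_burkholderSlope hp (Ioo_subset_Icc_self ht)))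
  exact (burkholderGap_one_div (by linarith)).ge.trans (h_min hs)

lemma rpow_sub_mul_rpow_le_burkholder {a b : ℝ} (ha : 0 ≤ a) (hb : 0 ≤ b) (hp : 2 ≤ p) :
    b ^ p - (p - 1) ^ p * a ^ p ≤
      burkholderConst p * ((a + b) ^ (p - 1) * (b - (p - 1) * a)) := by
  have hp₀ : p ≠ 0 := by linarith
  rcases (add_nonneg ha hb).eq_or_lt with hab | hab
  · obtain ⟨rfl, rfl⟩ := (add_eq_zero_iff_of_nonneg ha hb).1 hab.symm
    simp [Real.zero_rpow hp₀]
  · have normalized := burkholderGap_nonneg hp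
      ⟨div_nonneg ha hab.le, (div_le_one hab).2 (le_add_of_nonneg_right hb)⟩
    have h_one_sub : 1 - a / (a + b) = b / (a + b) := by field_simp; ring
    rw [burkholderGap, sub_nonneg, h_one_sub, Real.div_rpow hb hab.le,
      Real.div_rpow ha hab.le] at normalized
    calc b ^ p - (p - 1) ^ p * a ^ p
        = (a + b) ^ p * (b ^ p / (a + b) ^ p - (p - 1) ^ p * (a ^ p / (a + b) ^ p)) := by
          field_simp
      _ ≤ (a + b) ^ p * (burkholderConst p * (1 - p * (a / (a + b)))) := by gcongr
      _ = burkholderConst p * ((a + b) ^ (p - 1) * (b - (p - 1) * a)) := by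
          rw [← rpow_sub_one_mul_self hab.le hp₀]
          field_simp
          ring

section InnerProductSpace

variable {E : Type*} [NormedAddCommGroup E] [InnerProductSpace ℝ E]

lemma norm_rpow_sub_mul_inner_le (a t : E) (hp : 1 < p) :
    ‖a‖ ^ p - p * (‖a‖ ^ (p - 2) * ⟪a, t⟫_ℝ) ≤ ‖a - t‖ ^ p := by
  have tangent := rpow_add_mul_sub_le_rpow (norm_nonneg a) (norm_nonneg (a - t)) hp.le
  have cauchy_schwarz : ‖a‖ ^ 2 - ⟪a, t⟫_ℝ ≤ ‖a‖ * ‖a - t‖ := by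
    simpa [inner_sub_right] using real_inner_le_norm a (a - t)
  have weighted : p * ‖a‖ ^ (p - 2) * (‖a‖ ^ 2 - ⟪a, t⟫_ℝ) ≤
      p * ‖a‖ ^ (p - 2) * (‖a‖ * ‖a - t‖) := by gcongr
  rw [← rpow_sub_two_mul_self (norm_nonneg a) hp.ne'] at tangent
  linarith

lemma add_rpow_mul_sub_le_norm_rpow_mul_inner (x y : E) (hp : 2 ≤ p) :
    (‖x‖ + ‖y‖) ^ (p - 1) * (‖y‖ - (p - 1) * ‖x‖) ≤
      ‖x + y‖ ^ (p - 2) * ⟪x + y, y - (p - 1) • x⟫_ℝ := by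
  set α := ‖x‖ + ‖y‖
  set ρ := ‖x + y‖ with hρ
  set D := ‖y‖ ^ 2 - ‖x‖ ^ 2 with hD
  have hα₀ : 0 ≤ α := by positivity
  have hρ₀ : 0 ≤ ρ := norm_nonneg _
  have hρα : ρ ≤ α := norm_add_le x y
  have hDle : D ≤ α * ρ := by
    have triangle : ‖y‖ - ‖x‖ ≤ ρ := by simpa [hρ, add_comm] using norm_sub_norm_le y (-x)
    calc D = α * (‖y‖ - ‖x‖) := by ring
      _ ≤ α * ρ := by gcongr
  have inner_eq : 2 * ⟪x + y, y - (p - 1) • x⟫_ℝ = p * D - (p - 2) * ρ ^ 2 := by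
    rw [hρ, norm_add_sq_real]
    simp only [inner_add_left, inner_sub_right, real_inner_smul_right,
      real_inner_self_eq_norm_sq, real_inner_comm x y, hD]
    ring
  have rpow_mono : 0 ≤ p * (α ^ (p - 2) - ρ ^ (p - 2)) :=
    mul_nonneg (by linarith) (sub_nonneg.2 (by gcongr))
  have key := (mul_le_mul_of_nonneg_left hDle rpow_mono).trans
    (mul_rpow_sub_rpow_mul_le hρ₀ hρα hp)
  have hα_sq := rpow_sub_two_mul_sq hα₀ (show p ≠ 0 by linarith)
  have hρ_sq := rpow_sub_two_mul_sq hρ₀ (show p ≠ 0 by linarith)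
  refine le_of_mul_le_mul_left ?_ (zero_lt_two' ℝ)
  calc 2 * (α ^ (p - 1) * (‖y‖ - (p - 1) * ‖x‖))
      = p * α ^ (p - 2) * D - (p - 2) * α ^ p := by
        rw [← hα_sq, ← rpow_sub_two_mul_self hα₀ (by linarith)]
        ring
    _ ≤ p * ρ ^ (p - 2) * D - (p - 2) * ρ ^ p := by linarith
    _ = 2 * (ρ ^ (p - 2) * ⟪x + y, y - (p - 1) • x⟫_ℝ) := by
        rw [mul_left_comm, inner_eq, ← hρ_sq]
        ring

lemma norm_sub_rpow_sub_mul_norm_rpow_le (a x : E) (hp : 2 ≤ p) :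
    ‖a - x‖ ^ p - (p - 1) ^ p * ‖x‖ ^ p ≤
      burkholderConst p * (‖a‖ ^ p - p * (‖a‖ ^ (p - 2) * ⟪a, x⟫_ℝ)) := by
  have inner_eq : ⟪a, a - x - (p - 1) • x⟫_ℝ = ‖a‖ ^ 2 - p * ⟪a, x⟫_ℝ := by
    simp only [inner_sub_right, real_inner_smul_right, real_inner_self_eq_norm_sq]
    ring
  calc ‖a - x‖ ^ p - (p - 1) ^ p * ‖x‖ ^ p
      ≤ burkholderConst p *
          ((‖x‖ + ‖a - x‖) ^ (p - 1) * (‖a - x‖ - (p - 1) * ‖x‖)) :=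
        rpow_sub_mul_rpow_le_burkholder (norm_nonneg x) (norm_nonneg (a - x)) hp
    _ ≤ burkholderConst p * (‖x + (a - x)‖ ^ (p - 2) * ⟪x + (a - x), a - x - (p - 1) • x⟫_ℝ) :=
        mul_le_mul_of_nonneg_left (add_rpow_mul_sub_le_norm_rpow_mul_inner x (a - x) hp)
          (zero_le_one.trans (one_le_burkholderConst hp))
    _ = burkholderConst p * (‖a‖ ^ p - p * (‖a‖ ^ (p - 2) * ⟪a, x⟫_ℝ)) := by
        rw [add_sub_cancel, inner_eq, ← rpow_sub_two_mul_sq (p := p) (norm_nonneg a) (by linarith)]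
        ring

lemma norm_sub_rpow_le_add_mul_sub {a b x : E} {n : ℝ} (hn : 0 ≤ n)
    (hb : b = a - (n + 1)⁻¹ • x) (hp : 2 ≤ p) :
    ‖a - x‖ ^ p ≤ (p - 1) ^ p * ‖x‖ ^ p +
      burkholderConst p * ((n + 1) * ‖b‖ ^ p - n * ‖a‖ ^ p) := by
  have subgradient := norm_rpow_sub_mul_inner_le a ((n + 1)⁻¹ • x) (show 1 < p by linarith)
  rw [← hb, real_inner_smul_right] at subgradient
  have scaled : ‖a‖ ^ p - p * (‖a‖ ^ (p - 2) * ⟪a, x⟫_ℝ) ≤ (n + 1) * ‖b‖ ^ p - n * ‖a‖ ^ p := by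
    calc ‖a‖ ^ p - p * (‖a‖ ^ (p - 2) * ⟪a, x⟫_ℝ)
        = (n + 1) * (‖a‖ ^ p - p * (‖a‖ ^ (p - 2) * ((n + 1)⁻¹ * ⟪a, x⟫_ℝ))) - n * ‖a‖ ^ p := by
          field_simp
          ring
      _ ≤ (n + 1) * ‖b‖ ^ p - n * ‖a‖ ^ p := by gcongr
  have pointwise := norm_sub_rpow_sub_mul_norm_rpow_le a x hp
  have scaled_const :=
    mul_le_mul_of_nonneg_left scaled (zero_le_one.trans (one_le_burkholderConst hp))
  linarith

lemma sum_range_norm_sub_rpow_le {x y : ℕ → E} {M : ℕ}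
    (hy : ∀ n, y (n + 1) = y n - ((n : ℝ) + 1)⁻¹ • x n) (hyM : y M = 0) (hp : 2 ≤ p) :
    ∑ n ∈ Finset.range M, ‖y n - x n‖ ^ p ≤ (p - 1) ^ p * ∑ n ∈ Finset.range M, ‖x n‖ ^ p := by
  let T : ℕ → ℝ := fun n ↦ n * ‖y n‖ ^ p
  have telescope : ∑ n ∈ Finset.range M, (T (n + 1) - T n) = 0 := by
    rw [Finset.sum_range_sub]
    simp [T, hyM, Real.zero_rpow (show p ≠ 0 by linarith)]
  calc ∑ n ∈ Finset.range M, ‖y n - x n‖ ^ p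
      ≤ ∑ n ∈ Finset.range M,
          ((p - 1) ^ p * ‖x n‖ ^ p + burkholderConst p * (T (n + 1) - T n)) := by
        refine Finset.sum_le_sum fun n _ ↦ ?_
        simpa [T] using norm_sub_rpow_le_add_mul_sub n.cast_nonneg (hy n) hp
    _ = (p - 1) ^ p * ∑ n ∈ Finset.range M, ‖x n‖ ^ p := by
        rw [Finset.sum_add_distrib, ← Finset.mul_sum, ← Finset.mul_sum, telescope, mul_zero,
          add_zero]

end InnerProductSpace

lemma summable_norm_inv_smul {E : Type*} [SeminormedAddCommGroup E] [NormedSpace ℝ E]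
    {x : ℕ → E} (hp : 1 < p) (hx : Summable fun n ↦ ‖x n‖ ^ p) :
    Summable fun n : ℕ ↦ ‖((n : ℝ) + 1)⁻¹ • x n‖ := by
  have hpq := Real.HolderConjugate.conjExponent hp
  have h_inv : Summable fun n : ℕ ↦ ((n : ℝ) + 1)⁻¹ ^ p.conjExponent := by
    refine ((Real.summable_one_div_nat_add_rpow 1 _).2 hpq.symm.lt).congr fun n ↦ ?_
    rw [abs_of_nonneg (by positivity), Real.inv_rpow (by positivity), one_div]
  refine (Real.summable_mul_of_Lp_Lq_of_nonneg hpq.symm (fun n : ℕ ↦ by positivity)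
    (fun n ↦ norm_nonneg (x n)) h_inv hx).congr fun n ↦ ?_
  rw [norm_smul, Real.norm_of_nonneg (by positivity)]

section CompleteSpace

variable {E : Type*} [NormedAddCommGroup E] [InnerProductSpace ℝ E] [CompleteSpace E]

lemma sum_range_norm_tsum_sub_rpow_le {x : ℕ → E} (hp : 2 ≤ p)
    (hx : Summable fun n ↦ ‖x n‖ ^ p) (N : ℕ) :
    ∑ n ∈ Finset.range N, ‖∑' k, (((k + n : ℕ) : ℝ) + 1)⁻¹ • x (k + n) - x n‖ ^ p ≤
      (p - 1) ^ p * ∑' n, ‖x n‖ ^ p := by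
  let f : ℕ → E := fun k ↦ ((k : ℝ) + 1)⁻¹ • x k
  let S : ℕ → E := fun n ↦ ∑ k ∈ Finset.range n, f k
  have hf : Summable f := (summable_norm_inv_smul (by linarith) hx).of_norm
  have truncated (M : ℕ) (hNM : N ≤ M) :
      ∑ n ∈ Finset.range N, ‖S M - S n - x n‖ ^ p ≤ (p - 1) ^ p * ∑' n, ‖x n‖ ^ p := calc
    _ ≤ ∑ n ∈ Finset.range M, ‖S M - S n - x n‖ ^ p := by gcongr
    _ ≤ (p - 1) ^ p * ∑ n ∈ Finset.range M, ‖x n‖ ^ p := by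
        refine sum_range_norm_sub_rpow_le (y := fun n ↦ S M - S n) (fun n ↦ ?_) (sub_self _) hp
        simp only [S, f, Finset.sum_range_succ, sub_sub]
    _ ≤ (p - 1) ^ p * ∑' n, ‖x n‖ ^ p :=
        mul_le_mul_of_nonneg_left (hx.sum_le_tsum _ fun _ _ ↦ by positivity)
          (Real.rpow_nonneg (by linarith) p)
  have tail_eq (n : ℕ) : ∑' k, f (k + n) = ∑' k, f k - S n :=
    eq_sub_of_add_eq' (hf.sum_add_tsum_nat_add n)
  have h_lim : Tendsto (fun M ↦ ∑ n ∈ Finset.range N, ‖S M - S n - x n‖ ^ p) atTop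
      (𝓝 (∑ n ∈ Finset.range N, ‖∑' k, f (k + n) - x n‖ ^ p)) := by
    refine tendsto_finsetSum _ fun n _ ↦ ?_
    rw [tail_eq]
    exact ((hf.hasSum.tendsto_sum_nat.sub_const _).sub_const _).norm.rpow_const
      (.inr (by linarith))
  exact le_of_tendsto h_lim ((eventually_ge_atTop N).mono truncated)

theorem stmt3_general {x y : ℕ → E} (hp : 2 ≤ p) (hx : Summable fun n ↦ ‖x (n + 1)‖ ^ p)
    (hy : ∀ n : ℕ, y n = ∑' k : ℕ, ((n : ℝ) + 1 + k)⁻¹ • x (n + 1 + k)) :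
    (∀ n : ℕ, Summable fun k : ℕ ↦ ‖((n : ℝ) + 1 + k)⁻¹ • x (n + 1 + k)‖) ∧
    (Summable fun n ↦ ‖y n - x (n + 1)‖ ^ p) ∧
    ∑' n, ‖y n - x (n + 1)‖ ^ p ≤ (p - 1) ^ p * ∑' n, ‖x (n + 1)‖ ^ p := by
  have reindex (n k : ℕ) : ((n : ℝ) + 1 + k)⁻¹ • x (n + 1 + k) =
      (((k + n : ℕ) : ℝ) + 1)⁻¹ • x (k + n + 1) := by
    rw [show n + 1 + k = k + n + 1 by ring]
    push_cast
    ring_nf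
  simp only [reindex] at hy ⊢
  have h_nonneg (n : ℕ) : 0 ≤ ‖y n - x (n + 1)‖ ^ p := by positivity
  have partial_le (N : ℕ) : ∑ n ∈ Finset.range N, ‖y n - x (n + 1)‖ ^ p ≤
      (p - 1) ^ p * ∑' n, ‖x (n + 1)‖ ^ p := by
    simpa only [hy] using sum_range_norm_tsum_sub_rpow_le (x := fun n ↦ x (n + 1)) hp hx N
  exact ⟨fun n ↦ (summable_nat_add_iff n).2 <|
      summable_norm_inv_smul (x := fun n ↦ x (n + 1)) (by linarith) hx,
    summable_of_sum_range_le h_nonneg partial_le, Real.tsum_le_of_sum_range_le h_nonneg partial_le⟩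

end CompleteSpace

end

/-- Theorem 1 (discrete): for `p = 2i/(2j+1) > 2` and a real sequence `(x_n)_{n≥1}` with
`∑ |x_n|^p < ∞`, setting `y_n = ∑_{k=n}^∞ x_k / k` (the series converges absolutely),
one has `∑ |y_n - x_n|^p ≤ (p-1)^p ∑ |x_n|^p`. (Sequences are indexed so that term `n`
of the paper is `x (n+1)` here, `n : ℕ`.) -/
theorem stmt3 (p : ℝ) (i j : ℕ) (hi : 0 < i) (hj : 0 < j)
    (hp : p = 2 * (i : ℝ) / (2 * (j : ℝ) + 1)) (hp2 : 2 < p)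
    (x : ℕ → ℝ) (hx : Summable fun n : ℕ => |x (n + 1)| ^ p)
    (y : ℕ → ℝ) (hy : ∀ n : ℕ, y n = ∑' k : ℕ, x (n + 1 + k) / ((n : ℝ) + 1 + k)) :
    (∀ n : ℕ, Summable fun k : ℕ => |x (n + 1 + k) / ((n : ℝ) + 1 + k)|) ∧
    (Summable fun n : ℕ => |y n - x (n + 1)| ^ p) ∧
    ∑' n : ℕ, |y n - x (n + 1)| ^ p ≤ (p - 1) ^ p * ∑' n : ℕ, |x (n + 1)| ^ p := by
  simpa only [smul_eq_mul, Real.norm_eq_abs, ← div_eq_inv_mul] using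
    stmt3_general (x := x) (y := y) hp2.le hx
      (by simpa only [smul_eq_mul, ← div_eq_inv_mul] using hy)
end

section
/- Let 1 < p ≤ 2. For every real sequence (x_n)_{n≥1} with ∑_{n=1}^∞ |x_n|^p < ∞, setting y_n = (1/n)·∑_{k=1}^n x_k, one has ∑_{n=1}^∞ |y_n - x_n|^p ≤ (1/(p-1))^p · ∑_{n=1}^∞ |x_n|^p; moreover (1/(p-1))^p is the least such constant: for every c < (1/(p-1))^p there exists a real sequence (x_n) with 0 < ∑_{n=1}^∞ |x_n|^p < ∞ and ∑_{n=1}^∞ |y_n - x_n|^p > c · ∑_{n=1}^∞ |x_n|^p. That is, the operator norm of C - I on ℓ^p equals 1/(p-1). -/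
/-!
Let `y` be the mean of the first `n + 1` terms of a sequence, `x` the last of these terms and `z`
the mean of the first `n`, so that `(n + 1) y = n z + x`. For a suitable `A ≥ 0` one has
`|y - x| ^ p + A ((n + 1) |y| ^ p - n |z| ^ p) ≤ (1 / (p - 1)) ^ p |x| ^ p`,
and the bracket telescopes. The tangent line of `|·| ^ p` at `y` eliminates `z`, and homogeneity
then reduces to `x = 1`, where a function of `y` alone has to be maximised. Its derivative is
`p (y - 1) (|y - 1| ^ (p - 2) - (|y| / p) ^ (p - 2))`, so for `p < 2` its only local maxima are at
`y = p / (p - 1)`, with value `(1 / (p - 1)) ^ p`, and at `y = p / (p + 1)`. The value at the latter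
is no larger because `artanh ((p - 1) / p) ≤ (p - 1) artanh (1 / p)`.

For sharpness take `x_n = n ^ β - (n - 1) ^ β` with `β = 1 - 1 / p`. Then `y_n = n ^ (β - 1)`
exactly and `x_n / y_n → β`, so that `|y_n - x_n| ^ p / |x_n| ^ p` tends to
`((1 - β) / β) ^ p = (1 / (p - 1)) ^ p`. Since `∑ |x_n| ^ p` diverges like the harmonic series,
long truncations are near-extremal.
-/

open Filter Finset Topology

section RealPower

variable {a b p r s y z : ℝ}

theorem mul_rpow_sub_rpow_nonneg_of_nonpos (ha : 0 < a) (hb : 0 < b) (hr : r ≤ 0)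
    (h : 0 ≤ s * (b - a)) : 0 ≤ s * (a ^ r - b ^ r) := by
  rcases lt_trichotomy s 0 with hs | rfl | hs
  · have hba : b ≤ a := sub_nonpos.1 (nonpos_of_mul_nonneg_right h hs)
    exact mul_nonneg_of_nonpos_of_nonpos hs.le
      (sub_nonpos.2 (Real.rpow_le_rpow_of_nonpos hb hba hr))
  · simp
  · have hab : a ≤ b := sub_nonneg.1 (nonneg_of_mul_nonneg_right h hs)
    exact mul_nonneg hs.le (sub_nonneg.2 (Real.rpow_le_rpow_of_nonpos ha hab hr))

theorem abs_rpow_sub_two_mul_self_mul_self (hp : p ≠ 0) (y : ℝ) :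
    |y| ^ (p - 2) * y * y = |y| ^ p := by
  rcases eq_or_ne y 0 with rfl | hy
  · simp [Real.zero_rpow hp]
  · rw [mul_assoc, ← abs_mul_abs_self y, ← mul_assoc, ← Real.rpow_add_one (abs_ne_zero.2 hy),
      ← Real.rpow_add_one (abs_ne_zero.2 hy)]
    ring_nf

theorem hasDerivAt_abs_rpow_mul_self (r : ℝ) (hy : y ≠ 0) :
    HasDerivAt (fun y : ℝ => |y| ^ r * y) ((r + 1) * |y| ^ r) y := by
  have hpow := (hasDerivAt_abs hy).rpow_const (p := r) (Or.inl (abs_ne_zero.2 hy))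
  refine (hpow.mul (hasDerivAt_id y)).congr_deriv ?_
  have hsign : (SignType.sign y : ℝ) * y = |y| := sign_mul_self y
  have hr : |y| ^ (r - 1) * |y| = |y| ^ r := by
    rw [← Real.rpow_add_one (abs_ne_zero.2 hy), sub_add_cancel]
  simp only [id]
  linear_combination r * |y| ^ (r - 1) * hsign + r * hr

theorem continuous_abs_rpow_sub_two_mul_self (hp : 1 < p) :
    Continuous fun y : ℝ => |y| ^ (p - 2) * y := by
  have hderiv : deriv (fun y : ℝ => ‖y‖ ^ p) = fun y => p * (|y| ^ (p - 2) * y) := by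
    funext y
    rw [(hasDerivAt_norm_rpow y hp).deriv, mul_assoc, Real.norm_eq_abs]
  have hcont := (contDiff_norm_rpow (E := ℝ) hp).continuous_deriv le_rfl
  rw [hderiv] at hcont
  simpa [(zero_lt_one.trans hp).ne'] using hcont.const_mul p⁻¹

theorem add_mul_sub_le_of_convexOn_of_hasDerivAt {f : ℝ → ℝ} {f' : ℝ} (hf : ConvexOn ℝ Set.univ f)
    (hy : HasDerivAt f f' y) (z : ℝ) : f y + f' * (z - y) ≤ f z := by
  rcases lt_trichotomy y z with h | rfl | h
  · have := hf.le_slope_of_hasDerivAt (Set.mem_univ y) (Set.mem_univ z) h hy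
    rw [slope_def_field, le_div_iff₀ (sub_pos.2 h)] at this
    linarith
  · simp
  · have := hf.slope_le_of_hasDerivAt (Set.mem_univ z) (Set.mem_univ y) h hy
    rw [slope_def_field, div_le_iff₀ (sub_pos.2 h)] at this
    linarith

theorem convexOn_abs_rpow (hp : 1 ≤ p) : ConvexOn ℝ Set.univ fun y : ℝ => |y| ^ p := by
  refine ((convexOn_rpow hp).subset ?_ ?_).comp convexOn_univ_norm ?_
  · rintro _ ⟨y, -, rfl⟩
    exact norm_nonneg y
  · rw [Set.image_univ]
    exact (isPreconnected_range continuous_norm).ordConnected.convex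
  · rintro _ ⟨y, -, rfl⟩ _ _ h
    exact Real.rpow_le_rpow (norm_nonneg y) h (zero_le_one.trans hp)

theorem one_add_div_one_sub_mul_le_rpow (hs₀ : 0 ≤ s) (hs₁ : s ≤ 1) (hz₀ : 0 ≤ z) (hz₁ : z < 1) :
    (1 + s * z) / (1 - s * z) ≤ ((1 + z) / (1 - z)) ^ s := by
  have hsz : s * z < 1 := (mul_le_of_le_one_left hz₀ hs₁).trans_lt hz₁
  have hsz₀ : 0 ≤ s * z := mul_nonneg hs₀ hz₀
  have hlog : Real.log (1 + s * z) - Real.log (1 - s * z) ≤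
      s * (Real.log (1 + z) - Real.log (1 - z)) := by
    -- Both sides are odd power series with nonnegative coefficients, compared term by term.
    refine hasSum_le (fun k => ?_)
      (Real.hasSum_log_sub_log_of_abs_lt_one (abs_lt.2 ⟨by linarith, hsz⟩))
      ((Real.hasSum_log_sub_log_of_abs_lt_one (abs_lt.2 ⟨by linarith, hz₁⟩)).mul_left s)
    have hpow : s ^ (2 * k + 1) ≤ s := pow_le_of_le_one hs₀ hs₁ (by omega)
    calc 2 * (1 / (2 * (k : ℝ) + 1)) * (s * z) ^ (2 * k + 1)
        = 2 * (1 / (2 * (k : ℝ) + 1)) * (s ^ (2 * k + 1) * z ^ (2 * k + 1)) := by rw [mul_pow]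
      _ ≤ 2 * (1 / (2 * (k : ℝ) + 1)) * (s * z ^ (2 * k + 1)) := by gcongr
      _ = s * (2 * (1 / (2 * (k : ℝ) + 1)) * z ^ (2 * k + 1)) := by ring
  have h₁ : 0 < (1 + s * z) / (1 - s * z) := div_pos (by linarith) (by linarith)
  have h₂ : 0 < (1 + z) / (1 - z) := div_pos (by linarith) (by linarith)
  rw [← Real.log_le_log_iff h₁ (Real.rpow_pos_of_pos h₂ s), Real.log_rpow h₂,
    Real.log_div (by linarith) (by linarith), Real.log_div (by linarith) (by linarith)]
  exact hlog

theorem two_mul_sub_one_le_rpow (hp : 1 < p) (hp2 : p ≤ 2) :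
    2 * p - 1 ≤ ((p + 1) / (p - 1)) ^ (p - 1) := by
  have hq : 0 < p - 1 := by linarith
  have hp₀ : 0 < p := by linarith
  have hartanh := one_add_div_one_sub_mul_le_rpow (s := p - 1) (z := 1 / p) hq.le (by linarith)
    (by positivity) ((div_lt_one hp₀).2 hp)
  have hleft : (1 + (p - 1) * (1 / p)) / (1 - (p - 1) * (1 / p)) = 2 * p - 1 := by
    field_simp
    ring
  have hright : (1 + 1 / p) / (1 - 1 / p) = (p + 1) / (p - 1) := by field_simp
  rwa [hleft, hright] at hartanh

end RealPower

section Defect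

variable {p : ℝ}

/-- The coefficient of the telescoping term in the one-step inequality for means, chosen to make
`y = p / (p - 1)` a critical point of `cesaroDefect p`. -/
noncomputable def cesaroWeight (p : ℝ) : ℝ := p ^ (2 - p) / (p - 1)

/-- The value at `x = 1` of the functional
`|y - x| ^ p + A * (p * |y| ^ (p - 2) * y * x - (p - 1) * |y| ^ p)`, where `A = cesaroWeight p`,
`x` stands for a term of the sequence and `y` for the mean of the terms up to and including it.
By homogeneity its supremum bounds `‖C - I‖ ^ p` from above. -/
noncomputable def cesaroDefect (p y : ℝ) : ℝ :=
  |y - 1| ^ p + cesaroWeight p * (p * (|y| ^ (p - 2) * y) - (p - 1) * |y| ^ p)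

theorem cesaroWeight_nonneg (hp : 1 < p) : 0 ≤ cesaroWeight p :=
  div_nonneg (Real.rpow_nonneg (by linarith) _) (by linarith)

theorem continuous_cesaroDefect (hp : 1 < p) : Continuous (cesaroDefect p) := by
  have habs : Continuous fun y : ℝ => |y| ^ p :=
    continuous_abs.rpow_const fun _ => Or.inr (by linarith)
  have hsigned := continuous_abs_rpow_sub_two_mul_self hp
  exact (habs.comp (continuous_sub_right 1)).add
    (((hsigned.const_mul p).sub (habs.const_mul (p - 1))).const_mul _)

theorem hasDerivAt_cesaroDefect (hp : 1 < p) {y : ℝ} (hy : y ≠ 0) :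
    HasDerivAt (cesaroDefect p)
      (p * ((y - 1) * (|y - 1| ^ (p - 2) - (|y| / p) ^ (p - 2)))) y := by
  have hshift := (hasDerivAt_abs_rpow (y - 1) hp).comp_sub_const y 1
  have hsigned := (hasDerivAt_abs_rpow_mul_self (p - 2) hy).const_mul p
  have habs := (hasDerivAt_abs_rpow y hp).const_mul (p - 1)
  refine (hshift.add ((hsigned.sub habs).const_mul (cesaroWeight p))).congr_deriv ?_
  have hweight : cesaroWeight p * (p - 1) = p ^ (2 - p) :=
    div_mul_cancel₀ _ (by linarith)
  have hscale : (|y| / p) ^ (p - 2) = p ^ (2 - p) * |y| ^ (p - 2) := by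
    rw [Real.div_rpow (abs_nonneg y) (by linarith), div_eq_inv_mul,
      ← Real.rpow_neg (by linarith), neg_sub]
  rw [hscale, ← hweight]
  ring

theorem monotoneOn_cesaroDefect (hp : 1 < p) (hp2 : p ≤ 2) {S : Set ℝ} (hS : Convex ℝ S)
    (h : ∀ y ∈ interior S, y ≠ 0 ∧ y ≠ 1 ∧ 0 ≤ (y - 1) * (|y| / p - |y - 1|)) :
    MonotoneOn (cesaroDefect p) S := by
  refine monotoneOn_of_hasDerivWithinAt_nonneg hS (continuous_cesaroDefect hp).continuousOn
    (fun y hy => (hasDerivAt_cesaroDefect hp (h y hy).1).hasDerivWithinAt) fun y hy => ?_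
  obtain ⟨hy₀, hy₁, hsign⟩ := h y hy
  have hp₀ : 0 < p := by linarith
  exact mul_nonneg hp₀.le (mul_rpow_sub_rpow_nonneg_of_nonpos (abs_pos.2 (sub_ne_zero.2 hy₁))
    (div_pos (abs_pos.2 hy₀) hp₀) (by linarith) hsign)

theorem antitoneOn_cesaroDefect (hp : 1 < p) (hp2 : p ≤ 2) {S : Set ℝ} (hS : Convex ℝ S)
    (h : ∀ y ∈ interior S, y ≠ 0 ∧ y ≠ 1 ∧ (y - 1) * (|y| / p - |y - 1|) ≤ 0) :
    AntitoneOn (cesaroDefect p) S := by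
  refine antitoneOn_of_hasDerivWithinAt_nonpos hS (continuous_cesaroDefect hp).continuousOn
    (fun y hy => (hasDerivAt_cesaroDefect hp (h y hy).1).hasDerivWithinAt) fun y hy => ?_
  obtain ⟨hy₀, hy₁, hsign⟩ := h y hy
  have hp₀ : 0 < p := by linarith
  have hneg := mul_rpow_sub_rpow_nonneg_of_nonpos (s := -(y - 1)) (r := p - 2)
    (abs_pos.2 (sub_ne_zero.2 hy₁)) (div_pos (abs_pos.2 hy₀) hp₀) (by linarith) (by linarith)
  exact mul_nonpos_of_nonneg_of_nonpos hp₀.le (by linarith)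

theorem cesaroDefect_le_of_one_le (hp : 1 < p) (hp2 : p ≤ 2) {y : ℝ} (hy : 1 ≤ y) :
    cesaroDefect p y ≤ cesaroDefect p (p / (p - 1)) := by
  have hq : 0 < p - 1 := by linarith
  have hp₀ : 0 < p := by linarith
  have hc : 1 ≤ p / (p - 1) := by rw [le_div_iff₀ hq]; linarith
  rcases le_total y (p / (p - 1)) with h | h
  · refine monotoneOn_cesaroDefect hp hp2 (convex_Icc 1 (p / (p - 1))) ?_ ⟨hy, h⟩ ⟨hc, le_rfl⟩ h
    intro t ht
    rw [interior_Icc, Set.mem_Ioo, lt_div_iff₀ hq] at ht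
    refine ⟨by linarith, by linarith, mul_nonneg (by linarith) ?_⟩
    rw [abs_of_pos (by linarith), abs_of_pos (by linarith), sub_nonneg, le_div_iff₀ hp₀]
    linarith
  · refine antitoneOn_cesaroDefect hp hp2 (convex_Ici (p / (p - 1))) ?_ Set.self_mem_Ici h h
    intro t ht
    rw [interior_Ici, Set.mem_Ioi] at ht
    have ht₁ := hc.trans_lt ht
    rw [div_lt_iff₀ hq] at ht
    refine ⟨by linarith, by linarith, mul_nonpos_of_nonneg_of_nonpos (by linarith) ?_⟩
    rw [abs_of_pos (by linarith), abs_of_pos (by linarith), sub_nonpos, div_le_iff₀ hp₀]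
    linarith

theorem cesaroDefect_le_of_le_one (hp : 1 < p) (hp2 : p ≤ 2) {y : ℝ} (hy : y ≤ 1) :
    cesaroDefect p y ≤ cesaroDefect p (p / (p + 1)) := by
  have hp₀ : 0 < p := by linarith
  have hp₁ : 0 < p + 1 := by linarith
  have hc₀ : 0 < p / (p + 1) := by positivity
  have hc₁ : p / (p + 1) ≤ 1 := by rw [div_le_iff₀ hp₁]; linarith
  rcases le_total y (p / (p + 1)) with h | h
  · have hneg : MonotoneOn (cesaroDefect p) (Set.Iic 0) := by
      refine monotoneOn_cesaroDefect hp hp2 (convex_Iic 0) fun t ht => ?_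
      rw [interior_Iic, Set.mem_Iio] at ht
      refine ⟨ht.ne, by linarith, mul_nonneg_of_nonpos_of_nonpos (by linarith) ?_⟩
      rw [abs_of_neg ht, abs_of_neg (by linarith), sub_nonpos, div_le_iff₀ hp₀]
      nlinarith
    have hpos : MonotoneOn (cesaroDefect p) (Set.Icc 0 (p / (p + 1))) := by
      refine monotoneOn_cesaroDefect hp hp2 (convex_Icc 0 _) fun t ht => ?_
      rw [interior_Icc, Set.mem_Ioo, lt_div_iff₀ hp₁] at ht
      have ht₁ : t < 1 := by nlinarith
      refine ⟨by linarith, ht₁.ne, mul_nonneg_of_nonpos_of_nonpos (by linarith) ?_⟩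
      rw [abs_of_pos ht.1, abs_of_neg (by linarith), sub_nonpos, div_le_iff₀ hp₀]
      linarith
    have hmono := hneg.union_right hpos isGreatest_Iic (isLeast_Icc hc₀.le)
    rw [Set.Iic_union_Icc_eq_Iic hc₀.le] at hmono
    exact hmono h Set.self_mem_Iic h
  · refine antitoneOn_cesaroDefect hp hp2 (convex_Icc (p / (p + 1)) 1) ?_ ⟨le_rfl, hc₁⟩ ⟨h, hy⟩ h
    intro t ht
    rw [interior_Icc, Set.mem_Ioo] at ht
    have ht₀ := hc₀.trans ht.1
    rw [div_lt_iff₀ hp₁] at ht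
    refine ⟨ht₀.ne', ht.2.ne, mul_nonpos_of_nonpos_of_nonneg (by linarith) ?_⟩
    rw [abs_of_pos ht₀, abs_of_neg (by linarith), sub_nonneg, le_div_iff₀ hp₀]
    linarith

theorem cesaroDefect_div_sub_one (hp : 1 < p) :
    cesaroDefect p (p / (p - 1)) = (1 / (p - 1)) ^ p := by
  have hq : 0 < p - 1 := by linarith
  have hp₀ : 0 < p := by linarith
  have hshift : |p / (p - 1) - 1| = 1 / (p - 1) := by
    rw [div_sub_one hq.ne', sub_sub_cancel, abs_of_pos (by positivity)]
  have hcancel : p * (|p / (p - 1)| ^ (p - 2) * (p / (p - 1))) =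
      (p - 1) * |p / (p - 1)| ^ p := by
    rw [← abs_rpow_sub_two_mul_self_mul_self hp₀.ne' (p / (p - 1))]
    field_simp
  rw [cesaroDefect, hshift, hcancel, sub_self, mul_zero, add_zero]

theorem cesaroDefect_div_add_one_le (hp : 1 < p) (hp2 : p ≤ 2) :
    cesaroDefect p (p / (p + 1)) ≤ (1 / (p - 1)) ^ p := by
  have hq : 0 < p - 1 := by linarith
  have hp₀ : 0 < p := by linarith
  have hp₁ : 0 < p + 1 := by linarith
  have hsplit : ∀ t : ℝ, 0 < t → t ^ p = t ^ (p - 1) * t := fun t ht => by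
    rw [← Real.rpow_add_one ht.ne', sub_add_cancel]
  have hshift : |p / (p + 1) - 1| = 1 / (p + 1) := by
    rw [abs_sub_comm, one_sub_div hp₁.ne', add_sub_cancel_left, abs_of_pos (by positivity)]
  have hsigned : |p / (p + 1)| ^ (p - 2) * (p / (p + 1)) = (p / (p + 1)) ^ (p - 1) := by
    rw [abs_of_pos (by positivity), ← Real.rpow_add_one (by positivity)]
    ring_nf
  have hscale : p ^ (2 - p) * (p / (p + 1)) ^ (p - 1) = p * (1 / (p + 1)) ^ (p - 1) := by
    rw [div_eq_mul_one_div, Real.mul_rpow hp₀.le (by positivity), ← mul_assoc,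
      ← Real.rpow_add hp₀]
    norm_num
  calc cesaroDefect p (p / (p + 1))
      = (1 / (p + 1)) ^ (p - 1) * (1 / (p + 1)) + p ^ (2 - p) * (p / (p + 1)) ^ (p - 1) *
          (1 / (p - 1) * (p - (p - 1) * (p / (p + 1)))) := by
        rw [cesaroDefect, cesaroWeight, hshift, hsigned, abs_of_pos (by positivity),
          hsplit (p / (p + 1)) (by positivity), hsplit (1 / (p + 1)) (by positivity)]
        ring
    _ = (2 * p - 1) * (1 / (p + 1)) ^ (p - 1) * (1 / (p - 1)) := by
        rw [hscale]
        field_simp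
        ring
    _ ≤ ((p + 1) / (p - 1)) ^ (p - 1) * (1 / (p + 1)) ^ (p - 1) * (1 / (p - 1)) := by
        gcongr
        exact two_mul_sub_one_le_rpow hp hp2
    _ = (1 / (p - 1)) ^ p := by
        rw [← Real.mul_rpow (by positivity) (by positivity), hsplit (1 / (p - 1)) (by positivity)]
        congr 2
        field_simp

theorem cesaroDefect_le (hp : 1 < p) (hp2 : p ≤ 2) (y : ℝ) :
    cesaroDefect p y ≤ (1 / (p - 1)) ^ p := by
  rcases le_total y 1 with hy | hy
  · exact (cesaroDefect_le_of_le_one hp hp2 hy).trans (cesaroDefect_div_add_one_le hp hp2)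
  · exact (cesaroDefect_le_of_one_le hp hp2 hy).trans_eq (cesaroDefect_div_sub_one hp)

theorem abs_sub_rpow_add_cesaroWeight_mul_le (hp : 1 < p) (hp2 : p ≤ 2) (x y : ℝ) :
    |y - x| ^ p + cesaroWeight p * (p * (|y| ^ (p - 2) * y) * x - (p - 1) * |y| ^ p) ≤
      (1 / (p - 1)) ^ p * |x| ^ p := by
  have hp₀ : p ≠ 0 := by linarith
  rcases eq_or_ne x 0 with rfl | hx
  · have hweight : cesaroWeight p * (p - 1) = p ^ (2 - p) := div_mul_cancel₀ _ (by linarith)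
    have hone : 1 ≤ p ^ (2 - p) := Real.one_le_rpow hp.le (by linarith)
    have hy : 0 ≤ |y| ^ p := by positivity
    rw [sub_zero, abs_zero, Real.zero_rpow hp₀]
    nlinarith
  · obtain ⟨t, rfl⟩ : ∃ t, y = x * t := ⟨y / x, (mul_div_cancel₀ y hx).symm⟩
    have hshift : |x * t - x| ^ p = |x| ^ p * |t - 1| ^ p := by
      rw [← mul_sub_one, abs_mul, Real.mul_rpow (abs_nonneg x) (abs_nonneg _)]
    have hsigned : |x * t| ^ (p - 2) * (x * t) * x = |x| ^ p * (|t| ^ (p - 2) * t) := by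
      rw [abs_mul, Real.mul_rpow (abs_nonneg x) (abs_nonneg t),
        ← abs_rpow_sub_two_mul_self_mul_self hp₀ x]
      ring
    have habs : |x * t| ^ p = |x| ^ p * |t| ^ p := by
      rw [abs_mul, Real.mul_rpow (abs_nonneg x) (abs_nonneg t)]
    calc _ = cesaroDefect p t * |x| ^ p := by
          rw [cesaroDefect, hshift, mul_assoc p, hsigned, habs]
          ring
      _ ≤ (1 / (p - 1)) ^ p * |x| ^ p := by
          gcongr
          exact cesaroDefect_le hp hp2 t

theorem abs_sub_rpow_add_cesaroWeight_mul_sub_le (hp : 1 < p) (hp2 : p ≤ 2) {w x y z : ℝ}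
    (hw : 0 ≤ w) (hyz : (w + 1) * y = w * z + x) :
    |y - x| ^ p + cesaroWeight p * ((w + 1) * |y| ^ p - w * |z| ^ p) ≤
      (1 / (p - 1)) ^ p * |x| ^ p := by
  have htangent : |y| ^ p + p * |y| ^ (p - 2) * y * (z - y) ≤ |z| ^ p :=
    add_mul_sub_le_of_convexOn_of_hasDerivAt (convexOn_abs_rpow hp.le) (hasDerivAt_abs_rpow y hp) z
  have hself := abs_rpow_sub_two_mul_self_mul_self (by linarith : p ≠ 0) y
  have hwx : w * (z - y) = y - x := by linear_combination -hyz
  have hstep : (w + 1) * |y| ^ p - w * |z| ^ p ≤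
      p * (|y| ^ (p - 2) * y) * x - (p - 1) * |y| ^ p := by
    calc (w + 1) * |y| ^ p - w * |z| ^ p
        ≤ (w + 1) * |y| ^ p - w * (|y| ^ p + p * |y| ^ (p - 2) * y * (z - y)) := by gcongr
      _ = p * (|y| ^ (p - 2) * y) * x - (p - 1) * |y| ^ p := by
        linear_combination (-p * (|y| ^ (p - 2) * y)) * hwx - p * hself
  refine le_trans ?_ (abs_sub_rpow_add_cesaroWeight_mul_le hp hp2 x y)
  gcongr
  exact cesaroWeight_nonneg hp

end Defect

section CesaroMean

/-- The mean of the first `n` terms of a sequence indexed from zero, so that the Cesàro transform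
of `u` is `n ↦ cesaroMean u (n + 1)`; at `n = 0` the division by zero gives `0`. -/
noncomputable def cesaroMean (u : ℕ → ℝ) (n : ℕ) : ℝ := 1 / (n : ℝ) * ∑ k ∈ range n, u k

variable {p : ℝ} {u v : ℕ → ℝ}

theorem add_one_mul_cesaroMean_add_one (u : ℕ → ℝ) (n : ℕ) :
    ((n : ℝ) + 1) * cesaroMean u (n + 1) = n * cesaroMean u n + u n := by
  have hmul : ∀ m : ℕ, (m : ℝ) * cesaroMean u m = ∑ k ∈ range m, u k := by
    rintro (_ | m)
    · simp
    · rw [cesaroMean, ← mul_assoc, mul_one_div_cancel (by positivity), one_mul]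
  rw [hmul, ← sum_range_succ, ← hmul, Nat.cast_add_one]

theorem cesaroMean_congr {n : ℕ} (h : ∀ k < n, u k = v k) : cesaroMean u n = cesaroMean v n := by
  rw [cesaroMean, cesaroMean, sum_congr rfl fun k hk => h k (mem_range.1 hk)]

theorem sum_abs_cesaroMean_sub_rpow_add_le (hp : 1 < p) (hp2 : p ≤ 2) (u : ℕ → ℝ) (N : ℕ) :
    ∑ n ∈ range N, |cesaroMean u (n + 1) - u n| ^ p +
        cesaroWeight p * (N * |cesaroMean u N| ^ p) ≤
      (1 / (p - 1)) ^ p * ∑ n ∈ range N, |u n| ^ p := by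
  induction N with
  | zero => simp
  | succ n ih =>
    have hstep := abs_sub_rpow_add_cesaroWeight_mul_sub_le hp hp2 n.cast_nonneg
      (add_one_mul_cesaroMean_add_one u n)
    rw [sum_range_succ, sum_range_succ, Nat.cast_add_one]
    linarith

theorem sum_abs_cesaroMean_sub_rpow_le (hp : 1 < p) (hp2 : p ≤ 2)
    (hu : Summable fun n => |u n| ^ p) (N : ℕ) :
    ∑ n ∈ range N, |cesaroMean u (n + 1) - u n| ^ p ≤ (1 / (p - 1)) ^ p * ∑' n, |u n| ^ p := by
  have hconst : 0 ≤ (1 / (p - 1)) ^ p :=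
    Real.rpow_nonneg (one_div_nonneg.2 (sub_nonneg.2 hp.le)) p
  have hrest : 0 ≤ cesaroWeight p * (N * |cesaroMean u N| ^ p) :=
    mul_nonneg (cesaroWeight_nonneg hp) (by positivity)
  calc ∑ n ∈ range N, |cesaroMean u (n + 1) - u n| ^ p
      ≤ (1 / (p - 1)) ^ p * ∑ n ∈ range N, |u n| ^ p :=
        (le_add_of_nonneg_right hrest).trans (sum_abs_cesaroMean_sub_rpow_add_le hp hp2 u N)
    _ ≤ (1 / (p - 1)) ^ p * ∑' n, |u n| ^ p :=
        mul_le_mul_of_nonneg_left (hu.sum_le_tsum _ fun n _ => by positivity) hconst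

theorem summable_abs_cesaroMean_sub_rpow (hp : 1 < p) (hp2 : p ≤ 2)
    (hu : Summable fun n => |u n| ^ p) : Summable fun n => |cesaroMean u (n + 1) - u n| ^ p :=
  summable_of_sum_range_le (fun n => by positivity) (sum_abs_cesaroMean_sub_rpow_le hp hp2 hu)

theorem tsum_abs_cesaroMean_sub_rpow_le (hp : 1 < p) (hp2 : p ≤ 2)
    (hu : Summable fun n => |u n| ^ p) :
    ∑' n, |cesaroMean u (n + 1) - u n| ^ p ≤ (1 / (p - 1)) ^ p * ∑' n, |u n| ^ p :=
  Real.tsum_le_of_sum_range_le (fun n => by positivity) (sum_abs_cesaroMean_sub_rpow_le hp hp2 hu)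

end CesaroMean

section Sharpness

theorem exists_mul_sum_range_lt_sum_range {a b : ℕ → ℝ} {c c' : ℝ} (ha : ∀ n, 0 ≤ a n)
    (hdiv : ¬Summable a) (hc : c < c') (hab : ∀ᶠ n in atTop, c' * a n ≤ b n) :
    ∃ N, 0 < ∑ n ∈ range N, a n ∧ c * ∑ n ∈ range N, a n < ∑ n ∈ range N, b n := by
  have hA : Tendsto (fun N => ∑ n ∈ range N, a n) atTop atTop :=
    (not_summable_iff_tendsto_nat_atTop_of_nonneg ha).1 hdiv
  obtain ⟨M, hM⟩ := eventually_atTop.1 hab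
  set δ : ℝ := ∑ n ∈ range M, (b n - c' * a n)
  obtain ⟨N, hMN, hpos, hlarge⟩ := ((eventually_ge_atTop M).and ((hA.eventually_gt_atTop 0).and
    ((hA.const_mul_atTop (sub_pos.2 hc)).eventually_gt_atTop (-δ)))).exists
  have hδ : δ ≤ ∑ n ∈ range N, (b n - c' * a n) :=
    sum_le_sum_of_subset_of_nonneg (range_subset_range.2 hMN) fun n _ hn =>
      sub_nonneg.2 (hM n (not_lt.1 (mt mem_range.2 hn)))
  rw [sum_sub_distrib, ← mul_sum] at hδ
  exact ⟨N, hpos, by linarith⟩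

theorem exists_mul_tsum_lt_tsum_abs_cesaroMean_sub {p c c' : ℝ} (hp : 1 < p) (hp2 : p ≤ 2)
    {u : ℕ → ℝ} (hu : ¬Summable fun n => |u n| ^ p) (hc : c < c')
    (hlow : ∀ᶠ n in atTop, c' * |u n| ^ p ≤ |cesaroMean u (n + 1) - u n| ^ p) :
    ∃ v : ℕ → ℝ, (Summable fun n => |v n| ^ p) ∧ 0 < ∑' n, |v n| ^ p ∧
      c * ∑' n, |v n| ^ p < ∑' n, |cesaroMean v (n + 1) - v n| ^ p := by
  obtain ⟨N, hpos, hN⟩ := exists_mul_sum_range_lt_sum_range (fun n => by positivity) hu hc hlow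
  let v : ℕ → ℝ := fun n => if n < N then u n else 0
  have hvu : ∀ n < N, v n = u n := fun n hn => if_pos hn
  have hv₀ : ∀ n ∉ range N, |v n| ^ p = 0 := fun n hn => by
    rw [show v n = 0 from if_neg (mt mem_range.2 hn), abs_zero, Real.zero_rpow (by linarith)]
  have hv : Summable fun n => |v n| ^ p := summable_of_ne_finset_zero hv₀
  have htsum : ∑' n, |v n| ^ p = ∑ n ∈ range N, |u n| ^ p :=
    (tsum_eq_sum hv₀).trans (sum_congr rfl fun n hn => by rw [hvu n (mem_range.1 hn)])
  refine ⟨v, hv, htsum ▸ hpos, ?_⟩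
  calc c * ∑' n, |v n| ^ p = c * ∑ n ∈ range N, |u n| ^ p := by rw [htsum]
    _ < ∑ n ∈ range N, |cesaroMean u (n + 1) - u n| ^ p := hN
    _ = ∑ n ∈ range N, |cesaroMean v (n + 1) - v n| ^ p := by
        refine sum_congr rfl fun n hn => ?_
        have hnN := mem_range.1 hn
        rw [hvu n hnN, cesaroMean_congr fun k hk => hvu k (by omega)]
    _ ≤ ∑' n, |cesaroMean v (n + 1) - v n| ^ p :=
        (summable_abs_cesaroMean_sub_rpow hp hp2 hv).sum_le_tsum _ fun n _ => by positivity

/-- The increments of `k ↦ k ^ β`, whose partial sums are powers; for `β = 1 - 1 / p` they just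
fail to be in `ℓ^p`, and their truncations are near-extremal for `C - I`. -/
noncomputable def rpowIncrement (β : ℝ) (n : ℕ) : ℝ := ((n : ℝ) + 1) ^ β - (n : ℝ) ^ β

variable {β p : ℝ}

theorem cesaroMean_rpowIncrement (hβ : 0 < β) (n : ℕ) :
    cesaroMean (rpowIncrement β) (n + 1) = ((n : ℝ) + 1) ^ (β - 1) := by
  have hsum : ∑ k ∈ range (n + 1), rpowIncrement β k = ((n : ℝ) + 1) ^ β := by
    have htel := sum_range_sub (fun k : ℕ => (k : ℝ) ^ β) (n + 1)
    push_cast at htel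
    rw [Real.zero_rpow hβ.ne', sub_zero] at htel
    exact htel
  rw [cesaroMean, hsum, Nat.cast_add_one, Real.rpow_sub_one (by positivity)]
  ring

theorem mul_rpow_le_rpowIncrement (hβ : 0 ≤ β) (hβ₁ : β ≤ 1) (n : ℕ) :
    β * ((n : ℝ) + 1) ^ (β - 1) ≤ rpowIncrement β n := by
  have hn : 0 < (n : ℝ) + 1 := by positivity
  have hs : -1 ≤ -(1 / ((n : ℝ) + 1)) :=
    neg_le_neg (div_le_one_of_le₀ (le_add_of_nonneg_left n.cast_nonneg) hn.le)
  have hbernoulli : (n : ℝ) ^ β ≤ ((n : ℝ) + 1) ^ β * (1 + β * -(1 / ((n : ℝ) + 1))) := by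
    calc (n : ℝ) ^ β = (((n : ℝ) + 1) * (1 + -(1 / ((n : ℝ) + 1)))) ^ β := by
          congr 1
          field_simp
          ring
      _ = ((n : ℝ) + 1) ^ β * (1 + -(1 / ((n : ℝ) + 1))) ^ β :=
          Real.mul_rpow hn.le (by linarith)
      _ ≤ ((n : ℝ) + 1) ^ β * (1 + β * -(1 / ((n : ℝ) + 1))) := by
          gcongr
          exact rpow_one_add_le_one_add_mul_self hs hβ hβ₁
  calc β * ((n : ℝ) + 1) ^ (β - 1)
      = ((n : ℝ) + 1) ^ β - ((n : ℝ) + 1) ^ β * (1 + β * -(1 / ((n : ℝ) + 1))) := by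
        rw [Real.rpow_sub_one hn.ne']
        ring
    _ ≤ rpowIncrement β n := sub_le_sub_left hbernoulli _

theorem tendsto_rpowIncrement_div (β : ℝ) :
    Tendsto (fun n : ℕ => rpowIncrement β n / ((n : ℝ) + 1) ^ (β - 1)) atTop (𝓝 β) := by
  have hslope : Tendsto (slope (fun t : ℝ => t ^ β) 1) (𝓝[≠] 1) (𝓝 β) := by
    simpa using hasDerivAt_iff_tendsto_slope.1
      (Real.hasDerivAt_rpow_const (p := β) (Or.inl one_ne_zero))
  have hratio : Tendsto (fun n : ℕ => (n : ℝ) / ((n : ℝ) + 1)) atTop (𝓝[≠] 1) := by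
    refine tendsto_nhdsWithin_iff.2 ⟨tendsto_natCast_div_add_atTop 1, .of_forall fun n => ?_⟩
    have hn : (n : ℝ) + 1 ≠ 0 := by positivity
    simp [div_eq_one_iff_eq hn]
  refine (hslope.comp hratio).congr fun n => ?_
  have hn : 0 < (n : ℝ) + 1 := by positivity
  have hpow : ((n : ℝ) + 1) ^ β ≠ 0 := (Real.rpow_pos_of_pos hn β).ne'
  rw [Function.comp_apply, slope_def_field, Real.one_rpow, Real.div_rpow n.cast_nonneg hn.le,
    rpowIncrement, Real.rpow_sub_one hn.ne', div_sub_one hn.ne', div_sub_one hpow,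
    sub_add_cancel_left]
  field_simp
  ring

theorem not_summable_abs_rpowIncrement_rpow (hp : 1 < p) :
    ¬Summable fun n => |rpowIncrement (1 - 1 / p) n| ^ p := by
  intro hsum
  have hp₀ : 0 < p := by linarith
  have hinv : 1 / p < 1 := (div_lt_one hp₀).2 hp
  have hβ : 0 < 1 - 1 / p := sub_pos.2 hinv
  have hβ₁ : 1 - 1 / p ≤ 1 := sub_le_self 1 (by positivity)
  have hlow : ∀ n : ℕ, (1 - 1 / p) ^ p * (1 / ((n : ℝ) + 1)) ≤
      |rpowIncrement (1 - 1 / p) n| ^ p := by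
    intro n
    have hn : 0 < (n : ℝ) + 1 := by positivity
    calc (1 - 1 / p) ^ p * (1 / ((n : ℝ) + 1))
        = ((1 - 1 / p) * ((n : ℝ) + 1) ^ (1 - 1 / p - 1)) ^ p := by
          rw [Real.mul_rpow hβ.le (by positivity), ← Real.rpow_mul hn.le, sub_sub_cancel_left,
            neg_mul, one_div_mul_cancel hp₀.ne', Real.rpow_neg_one, ← one_div]
      _ ≤ |rpowIncrement (1 - 1 / p) n| ^ p :=
          Real.rpow_le_rpow (by positivity)
            ((mul_rpow_le_rpowIncrement hβ.le hβ₁ n).trans (le_abs_self _)) hp₀.le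
  have hharmonic : Summable fun n : ℕ => 1 / ((n : ℝ) + 1) :=
    (summable_mul_left_iff (Real.rpow_pos_of_pos hβ p).ne').1
      (hsum.of_nonneg_of_le (fun n => by positivity) hlow)
  exact Real.not_summable_one_div_natCast ((summable_nat_add_iff 1).1 (mod_cast hharmonic))

theorem eventually_mul_rpowIncrement_le (hp : 1 < p) {c : ℝ} (hc : c < (1 / (p - 1)) ^ p) :
    ∀ᶠ n in atTop, c * |rpowIncrement (1 - 1 / p) n| ^ p ≤
      |cesaroMean (rpowIncrement (1 - 1 / p)) (n + 1) - rpowIncrement (1 - 1 / p) n| ^ p := by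
  have hp₀ : 0 < p := by linarith
  have hq : 0 < p - 1 := by linarith
  have hβ : 0 < 1 - 1 / p := sub_pos.2 ((div_lt_one hp₀).2 hp)
  have hlim : Tendsto (fun t : ℝ => |1 - t| ^ p - c * |t| ^ p) (𝓝 (1 - 1 / p))
      (𝓝 (|1 - (1 - 1 / p)| ^ p - c * |1 - 1 / p| ^ p)) := by
    refine Continuous.tendsto ?_ _
    fun_prop (disch := linarith)
  have hpos : 0 < |1 - (1 - 1 / p)| ^ p - c * |1 - 1 / p| ^ p := by
    rw [sub_pos, sub_sub_cancel, abs_of_pos hβ, abs_of_pos (by positivity)]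
    calc c * (1 - 1 / p) ^ p < (1 / (p - 1)) ^ p * (1 - 1 / p) ^ p := by gcongr
      _ = (1 / p) ^ p := by
        rw [← Real.mul_rpow (by positivity) hβ.le]
        congr 1
        field_simp
  filter_upwards [(hlim.comp (tendsto_rpowIncrement_div _)).eventually_const_lt hpos] with n hn
  have hy : 0 < ((n : ℝ) + 1) ^ (1 - 1 / p - 1) := by positivity
  rw [cesaroMean_rpowIncrement hβ]
  set x := rpowIncrement (1 - 1 / p) n
  set y := ((n : ℝ) + 1) ^ (1 - 1 / p - 1)
  have hratio : c * |x / y| ^ p ≤ |1 - x / y| ^ p := (sub_pos.1 hn).le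
  rwa [one_sub_div hy.ne', abs_div, abs_div, abs_of_pos hy, Real.div_rpow (abs_nonneg x) hy.le,
    Real.div_rpow (abs_nonneg (y - x)) hy.le, ← mul_div_assoc,
    div_le_div_iff_of_pos_right (by positivity)] at hratio

end Sharpness

/-- Theorem 2, second part: for `1 < p ≤ 2`, the operator norm of `C - I` on `ℓ^p` equals
`1/(p-1)`: the inequality `∑ |y_n - x_n|^p ≤ (1/(p-1))^p ∑ |x_n|^p` holds with
`y_n = (1/n) ∑_{k=1}^n x_k`, and `(1/(p-1))^p` is the least such constant. (Sequences are
indexed so that term `n` of the paper is `x (n+1)` here, `n : ℕ`.) -/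
theorem stmt6 (p : ℝ) (hp1 : 1 < p) (hp2 : p ≤ 2) :
    (∀ x : ℕ → ℝ, (Summable fun n : ℕ => |x (n + 1)| ^ p) →
      ∑' n : ℕ, |(1 / ((n : ℝ) + 1)) * (∑ k ∈ Finset.range (n + 1), x (k + 1)) - x (n + 1)| ^ p
        ≤ (1 / (p - 1)) ^ p * ∑' n : ℕ, |x (n + 1)| ^ p) ∧
    ∀ c : ℝ, c < (1 / (p - 1)) ^ p → ∃ x : ℕ → ℝ,
      (Summable fun n : ℕ => |x (n + 1)| ^ p) ∧
      0 < ∑' n : ℕ, |x (n + 1)| ^ p ∧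
      c * ∑' n : ℕ, |x (n + 1)| ^ p <
        ∑' n : ℕ, |(1 / ((n : ℝ) + 1)) * (∑ k ∈ Finset.range (n + 1), x (k + 1)) - x (n + 1)| ^ p := by
  have hmean : ∀ (x : ℕ → ℝ) (n : ℕ), 1 / ((n : ℝ) + 1) * ∑ k ∈ range (n + 1), x (k + 1) =
      cesaroMean (fun k => x (k + 1)) (n + 1) := fun x n => by rw [cesaroMean, Nat.cast_add_one]
  simp only [hmean]
  refine ⟨fun x hx => tsum_abs_cesaroMean_sub_rpow_le hp1 hp2 hx, fun c hc => ?_⟩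
  obtain ⟨c', hcc', hc'⟩ := exists_between hc
  obtain ⟨v, hv⟩ := exists_mul_tsum_lt_tsum_abs_cesaroMean_sub hp1 hp2
    (not_summable_abs_rpowIncrement_rpow hp1) hcc' (eventually_mul_rpowIncrement_le hp1 hc')
  exact ⟨fun n => v (n - 1), hv⟩
end
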